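/- arXiv:math/0410283 — 6 statements merged into one kernel-verified Lean document; each statement's English description precedes it below -/
import Mathlib

section
/- Let (C_1, …, C_n) be a torsion n-tuple in an abelian category C. Then for every i with 1 ≤ i ≤ n−1, the pair ([C_1, …, C_i], [C_{i+1}, …, C_n]) is a torsion pair in C (i.e. a torsion 2-tuple). -/
open CategoryTheory CategoryTheory.Limits

universe u v

variable {C : Type u} [Category.{v} C] [Abelian C]

/-- A class of objects is closed under isomorphism. -/
def IsoClosed (S : Set C) : Prop :=
  ∀ ⦃X Y : C⦄, (X ≅ Y) → X ∈ S → Y ∈ S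

/-- A torsion pair `(𝒯, ℱ)` in an abelian category: both classes are closed under
isomorphism, there are no nonzero morphisms from `𝒯` to `ℱ`, and every object `X` fits
into a short exact sequence `0 → T → X → F → 0` with `T ∈ 𝒯`, `F ∈ ℱ`. -/
structure IsTorsionPair (𝒯 ℱ : Set C) : Prop where
  isoClosed_torsion : IsoClosed 𝒯
  isoClosed_free : IsoClosed ℱ
  hom_zero : ∀ ⦃X Y : C⦄, X ∈ 𝒯 → Y ∈ ℱ → ∀ f : X ⟶ Y, f = 0
  exists_ses : ∀ X : C, ∃ (T F : C) (i : T ⟶ X) (p : X ⟶ F) (w : i ≫ p = 0),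
    T ∈ 𝒯 ∧ F ∈ ℱ ∧ (ShortComplex.mk i p w).ShortExact


/-- There are no nonzero morphisms from objects of `𝒮` to objects of `𝒯`. -/
def HomOrth (𝒮 𝒯 : Set C) : Prop :=
  ∀ ⦃X Y : C⦄, X ∈ 𝒮 → Y ∈ 𝒯 → ∀ f : X ⟶ Y, f = 0

/-- `FiltClass [C₁, …, Cₖ]` is the class of objects `X` admitting a filtration
`0 = X₀ ≤ X₁ ≤ … ≤ Xₖ = X` with `Xⱼ/Xⱼ₋₁ ∈ Cⱼ`, expressed recursively: `X` sits in a
short exact sequence `0 → A → X → B → 0` with `A ∈ C₁` and `B` filtered by the rest. -/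
def FiltClass : List (Set C) → Set C
  | [] => {X : C | IsZero X}
  | 𝒮 :: rest => {X : C | ∃ (A B : C) (i : A ⟶ X) (p : X ⟶ B) (w : i ≫ p = 0),
      A ∈ 𝒮 ∧ B ∈ FiltClass rest ∧ (ShortComplex.mk i p w).ShortExact}

/-- A torsion `n`-tuple `(C₁, …, Cₙ)` in an abelian category, given as a list of classes
of objects: each class is closed under isomorphism, `Hom(Cᵢ, Cⱼ) = 0` for `i < j`, and
every object of `C` admits a filtration with subsequent quotients in `C₁, …, Cₙ`. -/
structure IsTorsionTuple (L : List (Set C)) : Prop where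
  isoClosed : ∀ S ∈ L, IsoClosed S
  homOrth : L.Pairwise HomOrth
  filt_univ : FiltClass L = Set.univ

theorem filtClass_isoClosed (L : List (Set C)) : IsoClosed (FiltClass L) := by
  intro X Y e hX
  cases L with
  | nil => exact IsZero.of_iso (show IsZero X from hX) e.symm
  | cons S L =>
    obtain ⟨A, B, i, p, w, hA, hB, hs⟩ := hX
    refine ⟨A, B, i ≫ e.hom, e.inv ≫ p, by simp [w], hA, hB, ?_⟩
    let φ : ShortComplex.mk i p w ≅
        ShortComplex.mk (i ≫ e.hom) (e.inv ≫ p) (by simp [w]) :=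
      ShortComplex.isoMk (Iso.refl _) e (Iso.refl _) (by simp) (by simp)
    exact ShortComplex.shortExact_of_iso φ hs

theorem filtClass_hom_left {L : List (Set C)} {Y : C}
    (h : ∀ S ∈ L, ∀ A ∈ S, ∀ f : A ⟶ Y, f = 0) :
    ∀ X ∈ FiltClass L, ∀ f : X ⟶ Y, f = 0 := by
  induction L with
  | nil => intro X hX f; exact IsZero.eq_of_src (show IsZero X from hX) _ _
  | cons S L ih =>
    rintro X ⟨A, B, i, p, w, hA, hB, hs⟩ f
    have h1 : i ≫ f = 0 := h S (by simp) A hA _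
    have := hs.epi_g
    have h2 : p ≫ hs.exact.desc f h1 = f := hs.exact.g_desc f h1
    rw [← h2, ih (fun S hS => h S (by simp [hS])) B hB (hs.exact.desc f h1), comp_zero]

theorem filtClass_hom_right {L : List (Set C)} {X : C}
    (h : ∀ S ∈ L, ∀ A ∈ S, ∀ f : X ⟶ A, f = 0) :
    ∀ Y ∈ FiltClass L, ∀ f : X ⟶ Y, f = 0 := by
  induction L with
  | nil => intro Y hY f; exact IsZero.eq_of_tgt (show IsZero Y from hY) _ _
  | cons S L ih =>
    rintro Y ⟨A, B, i, p, w, hA, hB, hs⟩ f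
    have h1 : f ≫ p = 0 := ih (fun S hS => h S (by simp [hS])) B hB _
    have := hs.mono_f
    have h2 : hs.exact.lift f h1 ≫ i = f := hs.exact.lift_f f h1
    rw [← h2, h S (by simp) A hA (hs.exact.lift f h1), zero_comp]

open ZeroObject in
theorem filtClass_append {L₁ L₂ : List (Set C)} : ∀ X ∈ FiltClass (L₁ ++ L₂),
    ∃ (T F : C) (i : T ⟶ X) (p : X ⟶ F) (w : i ≫ p = 0),
    T ∈ FiltClass L₁ ∧ F ∈ FiltClass L₂ ∧ (ShortComplex.mk i p w).ShortExact := by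
  induction L₁ with
  | nil =>
    intro X hX
    refine ⟨(0 : C), X, 0, 𝟙 X, by simp, isZero_zero C, hX, ?_⟩
    exact
      { exact := (ShortComplex.exact_iff_mono _ rfl).2 (by dsimp; infer_instance)
        mono_f := ⟨fun _ _ _ => (isZero_zero C).eq_of_tgt _ _⟩
        epi_g := by dsimp; infer_instance }
  | cons S L ih =>
    rintro X ⟨A, B, i, p, w, hA, hB, hs⟩
    obtain ⟨T, F, j, q, w', hT, hF, hs'⟩ := ih B hB
    have : Mono i := hs.mono_f
    have : Epi p := hs.epi_g
    have : Mono j := hs'.mono_f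
    have : Epi q := hs'.epi_g
    have wA : i ≫ p = 0 ≫ j := by simp [w]
    have wT : pullback.fst p j ≫ p ≫ q = 0 := by
      rw [← Category.assoc, pullback.condition, Category.assoc, w', comp_zero]
    have wK : pullback.lift i 0 wA ≫ pullback.snd p j = 0 := pullback.lift_snd _ _ _
    have mA : Mono (pullback.lift i 0 wA) := by
      have : Mono (pullback.lift i 0 wA ≫ pullback.fst p j) := by
        rw [pullback.lift_fst]; infer_instance
      exact mono_of_mono _ (pullback.fst p j)
    refine ⟨pullback p j, F, pullback.fst p j, p ≫ q, wT,
      ⟨A, T, pullback.lift i 0 wA, pullback.snd p j, wK, hA, hT, ?_⟩, hF, ?_⟩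
    · refine { exact := ?_, mono_f := mA, epi_g := by dsimp; infer_instance }
      refine ShortComplex.exact_of_f_is_kernel _ (KernelFork.IsLimit.ofι' _ _ fun {W} k hk => ?_)
      have h1 : (k ≫ pullback.fst p j) ≫ p = 0 := by
        dsimp at hk
        rw [Category.assoc, pullback.condition, ← Category.assoc, hk, zero_comp]
      have h2 : hs.exact.lift _ h1 ≫ i = k ≫ pullback.fst p j := hs.exact.lift_f _ h1
      refine ⟨hs.exact.lift _ h1, ?_⟩
      dsimp at hk ⊢
      apply pullback.hom_ext
      · rw [Category.assoc, pullback.lift_fst, h2]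
      · rw [Category.assoc, pullback.lift_snd, comp_zero, hk]
    · refine { exact := ?_, mono_f := by dsimp; infer_instance, epi_g := epi_comp p q }
      have : Mono (pullback.fst p j) := inferInstance
      refine ShortComplex.exact_of_f_is_kernel _ (KernelFork.IsLimit.ofι' _ _ fun {W} k hk => ?_)
      have h1 : (k ≫ p) ≫ q = 0 := by simpa using hk
      have h2 : hs'.exact.lift _ h1 ≫ j = k ≫ p := hs'.exact.lift_f _ h1
      exact ⟨pullback.lift k (hs'.exact.lift _ h1) h2.symm, pullback.lift_fst _ _ _⟩

/-- For a torsion `n`-tuple `(C₁, …, Cₙ)` and `1 ≤ i ≤ n - 1`, the pair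
`([C₁, …, Cᵢ], [Cᵢ₊₁, …, Cₙ])` is a torsion pair. -/
theorem stmt3 {L₁ L₂ : List (Set C)} (h : IsTorsionTuple (L₁ ++ L₂))
    (h₁ : L₁ ≠ []) (h₂ : L₂ ≠ []) :
    IsTorsionPair (FiltClass L₁) (FiltClass L₂) := by
  have hp := List.pairwise_append.1 h.homOrth
  refine ⟨filtClass_isoClosed _, filtClass_isoClosed _, ?_, ?_⟩
  · intro X Y hX hY
    exact filtClass_hom_left (fun S hS A hA =>
      filtClass_hom_right (fun S' hS' A' hA' => hp.2.2 S hS S' hS' hA hA') Y hY) X hX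
  · intro X
    exact filtClass_append X (by rw [h.filt_univ]; trivial)
end

section
/- Let (C_1, …, C_n) be a torsion n-tuple in an abelian category C, let 1 ≤ i ≤ n, and let (D_1, …, D_m) be a torsion m-tuple in C_i, meaning: each D_j is a class of objects of C_i closed under isomorphism, Hom(A, B) = 0 whenever A ∈ D_j, B ∈ D_k with j < k, and every object of C_i admits a filtration 0 = X_0 ≤ X_1 ≤ … ≤ X_m = X by subobjects with X_j/X_{j−1} ∈ D_j for all j. Then (C_1, …, C_{i−1}, D_1, …, D_m, C_{i+1}, …, C_n) is a torsion (n+m−1)-tuple in C. -/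
open CategoryTheory CategoryTheory.Limits

universe u v

variable {C : Type u} [Category.{v} C] [Abelian C]

theorem filtClass_iso {L : List (Set C)} {X Y : C} (e : X ≅ Y) (hX : X ∈ FiltClass L) :
    Y ∈ FiltClass L := by
  cases L with
  | nil => exact IsZero.of_iso (show IsZero X from hX) e.symm
  | cons T L =>
    obtain ⟨A, B, i, p, w, hA, hB, hs⟩ := hX
    refine ⟨A, B, i ≫ e.hom, e.inv ≫ p, by simp [w], hA, hB, ?_⟩
    exact ShortComplex.shortExact_of_iso (S₁ := ShortComplex.mk i p w)
      (ShortComplex.isoMk (Iso.refl _) e (Iso.refl _) (by simp) (by simp)) hs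

theorem ses_refine {A X B A₁ A₂ : C} {i : A ⟶ X} {p : X ⟶ B} {w : i ≫ p = 0}
    (hs : (ShortComplex.mk i p w).ShortExact) {j : A₁ ⟶ A} {q : A ⟶ A₂} {w' : j ≫ q = 0}
    (hs' : (ShortComplex.mk j q w').ShortExact) :
    ∃ (Y : C) (r : X ⟶ Y) (f : A₂ ⟶ Y) (g : Y ⟶ B) (w₁ : (j ≫ i) ≫ r = 0) (w₂ : f ≫ g = 0),
      (ShortComplex.mk (j ≫ i) r w₁).ShortExact ∧ (ShortComplex.mk f g w₂).ShortExact := by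
  have hi : Mono i := hs.mono_f
  have hp : Epi p := hs.epi_g
  have hj : Mono j := hs'.mono_f
  have hq : Epi q := hs'.epi_g
  let r := cokernel.π (j ≫ i)
  have w₁ : (j ≫ i) ≫ r = 0 := cokernel.condition _
  have h₁ : (ShortComplex.mk (j ≫ i) r w₁).Exact :=
    ShortComplex.exact_of_g_is_cokernel _ (cokernelIsCokernel (j ≫ i))
  have hf0 : j ≫ (i ≫ r) = 0 := by rw [← Category.assoc, w₁]
  obtain ⟨f, hf⟩ : ∃ f : A₂ ⟶ cokernel (j ≫ i), q ≫ f = i ≫ r :=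
    ⟨hs'.exact.desc (i ≫ r) hf0, hs'.exact.g_desc _ _⟩
  obtain ⟨g, hg⟩ : ∃ g : cokernel (j ≫ i) ⟶ B, r ≫ g = p :=
    ⟨cokernel.desc _ p (by rw [Category.assoc, w, comp_zero]), cokernel.π_desc _ _ _⟩
  have w₂ : f ≫ g = 0 := by
    rw [← cancel_epi q, ← Category.assoc, hf, Category.assoc, hg, w, comp_zero]
  have hgepi : Epi g := by
    have : Epi (r ≫ g) := by rw [hg]; exact hp
    exact epi_of_epi r g
  have hfmono : Mono f := by
    refine Preadditive.mono_of_cancel_zero f fun {Z} a ha => ?_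
    obtain ⟨Z', π, hπ, a', ha'⟩ := surjective_up_to_refinements_of_epi q a
    have h0 : (a' ≫ i) ≫ r = 0 := by
      rw [Category.assoc, ← hf, ← Category.assoc, ← ha', Category.assoc, ha, comp_zero]
    have hb := h₁.lift_f (a' ≫ i) h0
    dsimp only at hb
    rw [← Category.assoc, cancel_mono] at hb
    rw [← cancel_epi π, ha', ← hb, Category.assoc, w', comp_zero, comp_zero]
  have h₂ : (ShortComplex.mk f g w₂).Exact := by
    rw [ShortComplex.exact_iff_exact_up_to_refinements]
    intro Z y hy
    dsimp only at y hy ⊢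
    obtain ⟨Z', π, hπ, x, hx⟩ := surjective_up_to_refinements_of_epi r y
    have h0 : x ≫ p = 0 := by
      rw [← hg, ← Category.assoc, ← hx, Category.assoc, hy, comp_zero]
    have ha := hs.exact.lift_f x h0
    dsimp only at ha
    refine ⟨Z', π, hπ, hs.exact.lift x h0 ≫ q, ?_⟩
    rw [hx, Category.assoc, hf, ← Category.assoc, ha]
  exact ⟨_, r, f, g, w₁, w₂,
    { exact := h₁, mono_f := mono_comp j i, epi_g := inferInstanceAs (Epi (cokernel.π (j ≫ i))) },
    { exact := h₂, mono_f := hfmono, epi_g := hgepi }⟩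

theorem filtClass_append_s4 {D L : List (Set C)} {A X B : C} {i : A ⟶ X} {p : X ⟶ B}
    {w : i ≫ p = 0} (hA : A ∈ FiltClass D) (hB : B ∈ FiltClass L)
    (hs : (ShortComplex.mk i p w).ShortExact) : X ∈ FiltClass (D ++ L) := by
  induction D generalizing A X with
  | nil =>
    have : IsIso p := hs.isIso_g_iff.2 hA
    exact filtClass_iso (asIso p).symm hB
  | cons T D ih =>
    obtain ⟨A₁, A₂, j, q, w', hA₁, hA₂, hs'⟩ := hA
    obtain ⟨Y, r, f, g, w₁, w₂, h₁, h₂⟩ := ses_refine hs hs'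
    exact ⟨A₁, Y, j ≫ i, r, w₁, hA₁, ih hA₂ h₂, h₁⟩

theorem filtClass_subst {L₁ L₂ D : List (Set C)} {S : Set C}
    (hD : ∀ X ∈ S, X ∈ FiltClass D) {X : C} (hX : X ∈ FiltClass (L₁ ++ S :: L₂)) :
    X ∈ FiltClass (L₁ ++ (D ++ L₂)) := by
  induction L₁ generalizing X with
  | nil =>
    obtain ⟨A, B, i, p, w, hA, hB, hs⟩ := hX
    exact filtClass_append_s4 (D := D) (L := L₂) (hD A hA) hB hs
  | cons T L ih =>
    obtain ⟨A, B, i, p, w, hA, hB, hs⟩ := hX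
    exact ⟨A, B, i, p, w, hA, ih hB, hs⟩

/-- Substituting a torsion `m`-tuple `(D₁, …, Dₘ)` of the class `Cᵢ = S` (each `Dⱼ` a class
of objects of the full subcategory `S`, closed under isomorphism, with `Hom(Dⱼ, Dₖ) = 0`
for `j < k`, and every object of `S` filtered with quotients in `D₁, …, Dₘ`) into a torsion
`n`-tuple `(C₁, …, Cᵢ₋₁, S, Cᵢ₊₁, …, Cₙ)` yields the torsion `(n + m - 1)`-tuple
`(C₁, …, Cᵢ₋₁, D₁, …, Dₘ, Cᵢ₊₁, …, Cₙ)`. -/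
theorem stmt4 {L₁ L₂ : List (Set C)} {S : Set C}
    (h : IsTorsionTuple (L₁ ++ S :: L₂))
    (D : List (Set C))
    (hDsub : ∀ T ∈ D, T ⊆ S)
    (hDiso : ∀ T ∈ D, IsoClosed T)
    (hDorth : D.Pairwise HomOrth)
    (hDfilt : ∀ X ∈ S, X ∈ FiltClass D) :
    IsTorsionTuple (L₁ ++ D ++ L₂) := by
  obtain ⟨hiso, horth, hfilt⟩ := h
  rw [List.append_assoc]
  refine ⟨?_, ?_, ?_⟩
  · intro T hT
    simp only [List.mem_append] at hT
    rcases hT with hT | hT | hT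
    · exact hiso T (by simp [hT])
    · exact hDiso T hT
    · exact hiso T (by simp [hT])
  · rw [List.pairwise_append, List.pairwise_cons] at horth
    obtain ⟨h1, ⟨hS, h2⟩, h12⟩ := horth
    rw [List.pairwise_append, List.pairwise_append]
    refine ⟨h1, ⟨hDorth, h2, ?_⟩, ?_⟩
    · intro T hT U hU X Y hX hY
      exact hS U hU (hDsub T hT hX) hY
    · intro T hT U hU
      rcases List.mem_append.1 hU with hU | hU
      · intro X Y hX hY
        exact h12 T hT S (by simp) hX (hDsub U hU hY)
      · exact h12 T hT U (by simp [hU])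
  · refine Set.eq_univ_of_forall fun X => filtClass_subst hDfilt ?_
    rw [hfilt]
    trivial
end

section
/- Let (C_1, …, C_n) be a torsion n-tuple in an abelian category C. Then each class C_i is stable under extensions: for every short exact sequence 0 → A → B → C → 0 in C with A ∈ C_i and C ∈ C_i, also B ∈ C_i. -/
open CategoryTheory CategoryTheory.Limits

universe u v

variable {C : Type u} [Category.{v} C] [Abelian C]

theorem aux_from (E : ShortComplex C) (hE : E.ShortExact) (Z : C)
    (h1 : ∀ f : E.X₁ ⟶ Z, f = 0) (h3 : ∀ f : E.X₃ ⟶ Z, f = 0) (f : E.X₂ ⟶ Z) : f = 0 := by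
  haveI := hE.epi_g
  rw [← hE.exact.g_desc f (h1 _), h3 (hE.exact.desc f (h1 _)), comp_zero]

theorem aux_to (E : ShortComplex C) (hE : E.ShortExact) (Z : C)
    (h1 : ∀ f : Z ⟶ E.X₁, f = 0) (h3 : ∀ f : Z ⟶ E.X₃, f = 0) (f : Z ⟶ E.X₂) : f = 0 := by
  haveI := hE.mono_f
  rw [← hE.exact.lift_f f (h3 _), h1 (hE.exact.lift f (h3 _)), zero_comp]

theorem aux_filt (A : C) : ∀ (R : List (Set C)) (_ : ∀ T ∈ R, ∀ Y ∈ T, ∀ f : A ⟶ Y, f = 0)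
    (B : C), B ∈ FiltClass R → ∀ f : A ⟶ B, f = 0
  | [], _, _, hB, f => IsZero.eq_of_tgt hB f 0
  | T :: R, h, B, hB, f => by
    obtain ⟨A', B', i, p, w, hA', hB', hs⟩ := hB
    exact aux_to _ hs A (h T (by simp) A' hA')
      (aux_filt A R (fun T hT => h T (by simp [hT])) B' hB') f

theorem aux_strip (S : Set C) (R : List (Set C)) : ∀ (P : List (Set C)) (X : C)
    (_ : ∀ T ∈ P, ∀ Y ∈ T, ∀ f : Y ⟶ X, f = 0), X ∈ FiltClass (P ++ S :: R) →
    ∃ Y, Nonempty (Y ≅ X) ∧ Y ∈ FiltClass (S :: R)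
  | [], X, _, hX => ⟨X, ⟨Iso.refl _⟩, hX⟩
  | T :: P, X, h, hX => by
    obtain ⟨A, B, i, p, w, hA, hB, hs⟩ := hX
    have hi : i = 0 := h T (by simp) A hA i
    haveI : Epi p := hs.epi_g
    haveI : Mono p := hs.exact.mono_g hi
    haveI : IsIso p := isIso_of_mono_of_epi p
    obtain ⟨Y, ⟨e⟩, hY⟩ := aux_strip S R P B (fun T hT Y hY f => by
      have := h T (by simp [hT]) Y hY (f ≫ inv p)
      simpa using congrArg (· ≫ p) this) hB
    exact ⟨Y, ⟨e ≪≫ (asIso p).symm⟩, hY⟩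

/-- Each class of a torsion `n`-tuple is stable under extensions. -/
theorem stmt5 {L : List (Set C)} (h : IsTorsionTuple L) {S : Set C} (hS : S ∈ L)
    (E : ShortComplex C) (hE : E.ShortExact) (h1 : E.X₁ ∈ S) (h3 : E.X₃ ∈ S) :
    E.X₂ ∈ S := by
  have hiso := h.isoClosed S hS
  obtain ⟨P, R, rfl⟩ := List.append_of_mem hS
  obtain ⟨-, hSR, hPS⟩ := List.pairwise_append.1 h.homOrth
  have hR := (List.pairwise_cons.1 hSR).1
  have hX : E.X₂ ∈ FiltClass (P ++ S :: R) := h.filt_univ ▸ Set.mem_univ _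
  obtain ⟨Y, ⟨e⟩, A, B, i, p, w, hA, hB, hs⟩ := aux_strip S R P E.X₂
    (fun T hT Y hY => aux_to E hE Y (hPS T hT S (by simp) hY h1) (hPS T hT S (by simp) hY h3)) hX
  have hB0 : ∀ f : E.X₂ ⟶ B, f = 0 := aux_from E hE B
    (aux_filt _ R (fun T hT Z hZ => hR T hT h1 hZ) B hB)
    (aux_filt _ R (fun T hT Z hZ => hR T hT h3 hZ) B hB)
  have hp : p = 0 := by simpa using congrArg (e.hom ≫ ·) (hB0 (e.inv ≫ p))
  haveI : Mono i := hs.mono_f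
  haveI : Epi i := hs.exact.epi_f hp
  haveI : IsIso i := isIso_of_mono_of_epi i
  exact hiso (asIso i ≪≫ e) hA
end

section
/- For z ∈ ℂ one has iz − z ∈ L_sq if and only if z is congruent modulo L_sq to 0 or to (1+i)/2; moreover (1+i)/2 ∉ L_sq. Thus the fixed points of multiplication by i on ℂ/L_sq are exactly two points. -/
/-- The square lattice `L_sq = ℤi + ℤ ⊆ ℂ`. -/
def Lsq : Set ℂ := {z | ∃ m n : ℤ, z = m * Complex.I + n}

theorem mem_Lsq_iff (z : ℂ) : z ∈ Lsq ↔ ∃ m n : ℤ, z.re = n ∧ z.im = m := by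
  simp [Lsq, Complex.ext_iff]

/-- For `z ∈ ℂ` one has `iz - z ∈ L_sq` iff `z` is congruent mod `L_sq` to `0` or to
`(1+i)/2`, and `(1+i)/2 ∉ L_sq`; so multiplication by `i` on `ℂ/L_sq` has exactly two
fixed points. -/
theorem stmt9 :
    (∀ z : ℂ, Complex.I * z - z ∈ Lsq ↔
      (z - 0 ∈ Lsq ∨ z - (1 + Complex.I)/2 ∈ Lsq)) ∧
    (1 + Complex.I)/2 ∉ Lsq := by
  have hre : ((1 + Complex.I)/2).re = 1/2 := by simp
  have him : ((1 + Complex.I)/2).im = 1/2 := by simp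
  refine ⟨fun z => ?_, ?_⟩
  · simp only [mem_Lsq_iff, Complex.sub_re, Complex.sub_im, hre, him, Complex.I_mul_re,
      Complex.I_mul_im, sub_zero, Complex.zero_re, Complex.zero_im]
    constructor
    · rintro ⟨m, n, h1, h2⟩
      rcases Int.even_or_odd' (m - n) with ⟨k, hk | hk⟩
      · left
        have hk' : (m : ℝ) - n = 2 * k := by exact_mod_cast hk
        refine ⟨-n - k, k, ?_, ?_⟩ <;> push_cast <;> linarith
      · right
        have hk' : (m : ℝ) - n = 2 * k + 1 := by exact_mod_cast hk
        refine ⟨-n - k - 1, k, ?_, ?_⟩ <;> push_cast <;> linarith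
    · rintro (⟨m, n, h1, h2⟩ | ⟨m, n, h1, h2⟩)
      · refine ⟨n - m, -n - m, ?_, ?_⟩ <;> push_cast <;> linarith
      · refine ⟨n - m, -n - m - 1, ?_, ?_⟩ <;> push_cast <;> linarith
  · rw [mem_Lsq_iff, hre]
    rintro ⟨m, n, h1, -⟩
    have h : (1 : ℝ) = 2 * n := by linarith
    have h' : (1 : ℤ) = 2 * n := by exact_mod_cast h
    omega
end

section
/- Take τ = i and define g : ℤ² → ℤ² by g(m, n) = (n, −m), so that (g·v)_ℂ = i·v_ℂ where v_ℂ = mi + n. Define c : ℤ² → (ℂ → ℂ) by c_v(z) = (1/4)·(c⁰_v(z) + c⁰_{g·v}(iz) + c⁰_{g²·v}(−z) + c⁰_{g³·v}(−iz)). Then: (a) for all v ∈ ℤ² and z ∈ ℂ, c_{g·v}(iz) = c_v(z) (G-invariance); and (b) for all v₁ = (m₁, n₁), v₂ = (m₂, n₂) in ℤ² and z ∈ ℂ, c_{v₁}(z) + c_{v₂}(z + m₁i + n₁) − c_{v₁+v₂}(z) = m₁n₂ − m₂n₁ (the cocycle identity). -/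
/-- The functions `c⁰_{(m,n)}(z) = -2mz - m(mi + n)` (the case `τ = i`). -/
noncomputable def c0 (v : ℤ × ℤ) (z : ℂ) : ℂ :=
  -2 * (v.1 : ℂ) * z - (v.1 : ℂ) * ((v.1 : ℂ) * Complex.I + (v.2 : ℂ))

/-- The generator of `ℤ/4` acting on `ℤ²`: `g(m, n) = (n, -m)`, so that
`(g·v)_ℂ = i·v_ℂ` where `(m, n)_ℂ = mi + n`. -/
def g (v : ℤ × ℤ) : ℤ × ℤ := (v.2, -v.1)

/-- The averaged functions `c_v(z) = (1/4)·∑_{k=0}^{3} c⁰_{gᵏv}(iᵏz)`. -/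
noncomputable def c (v : ℤ × ℤ) (z : ℂ) : ℂ :=
  (1/4) * (c0 v z + c0 (g v) (Complex.I * z) + c0 (g (g v)) (-z)
    + c0 (g (g (g v))) (-Complex.I * z))

/-- The averaged functions `c` are `G`-invariant, `c_{g·v}(iz) = c_v(z)`, and satisfy the
cocycle identity `c_{v₁}(z) + c_{v₂}(z + m₁i + n₁) - c_{v₁+v₂}(z) = m₁n₂ - m₂n₁`. -/
theorem stmt16 :
    (∀ (v : ℤ × ℤ) (z : ℂ), c (g v) (Complex.I * z) = c v z) ∧
    (∀ (m₁ n₁ m₂ n₂ : ℤ) (z : ℂ),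
      c (m₁, n₁) z + c (m₂, n₂) (z + (m₁ : ℂ) * Complex.I + (n₁ : ℂ))
        - c (m₁ + m₂, n₁ + n₂) z
        = ((m₁ * n₂ - m₂ * n₁ : ℤ) : ℂ)) := by
  have hI : Complex.I * Complex.I = -1 := Complex.I_mul_I
  constructor
  · rintro ⟨m, n⟩ z
    simp only [c, c0, g]
    push_cast
    grind
  · intro m₁ n₁ m₂ n₂ z
    simp only [c, c0, g]
    push_cast
    grind
end

section
/- Let M be a right B-module, where B = A∗G is the skew group ring of a finite group G acting on a ring A with |G| invertible in A. Then M is projective as a right B-module if and only if M is projective as a right A-module (under restriction of scalars along the inclusion A → B). -/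
open MulOpposite in
theorem aux_free {A B : Type*} [Ring A] [Ring B]
    {G : Type*} [Group G] [Fintype G] [MulSemiringAction G A]
    (φ : A →+* B) (u : G → Bˣ)
    (hcomm : ∀ (g : G) (a : A), (u g : B) * φ a = φ (g • a) * (u g : B))
    (hbasis : ∀ b : B, ∃! c : G → A, b = ∑ g : G, φ (c g) * (u g : B))
    [Module Aᵐᵒᵖ Bᵐᵒᵖ] (hs : ∀ (a : Aᵐᵒᵖ) (b : Bᵐᵒᵖ), a • b = RingHom.op φ a * b) :
    Module.Free Aᵐᵒᵖ Bᵐᵒᵖ := by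
  have key : ∀ c : G → Aᵐᵒᵖ, Fintype.linearCombination Aᵐᵒᵖ (fun g => op (u g : B)) c
      = op (∑ g, φ (g • unop (c g)) * (u g : B)) := by
    intro c
    rw [Fintype.linearCombination_apply, Finset.op_sum]
    refine Finset.sum_congr rfl fun g _ => ?_
    rw [hs, ← hcomm, op_mul]
    rfl
  refine Module.Free.of_equiv (LinearEquiv.ofBijective
    (Fintype.linearCombination Aᵐᵒᵖ (fun g => op (u g : B))) ⟨?_, ?_⟩)
  · intro c d hcd
    rw [key, key, op_inj] at hcd
    obtain ⟨e, -, he⟩ := hbasis (∑ g, φ (g • unop (c g)) * (u g : B))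
    have h := (he (fun g => g • unop (c g)) rfl).trans (he (fun g => g • unop (d g)) hcd).symm
    funext g
    have := congrFun h g
    exact unop_injective (smul_left_cancel g this)
  · intro b
    obtain ⟨c, hc, -⟩ := hbasis (unop b)
    refine ⟨fun g => op (g⁻¹ • c g), ?_⟩
    rw [key]
    simp only [unop_op, smul_inv_smul]
    rw [← hc, op_unop]

theorem aux_fwd {R S M : Type*} [Ring R] [Ring S] [AddCommGroup M] [Module R S] [Module S M]
    [Module R M] [IsScalarTower R S M] [IsScalarTower R S S] [Module.Free R S] [Module.Projective S M] :
    Module.Projective R M := by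
  obtain ⟨s, hs⟩ := Module.projective_def'.1 (inferInstance : Module.Projective S M)
  refine Module.Projective.of_split (M := M →₀ S) (s.restrictScalars R)
    ((Finsupp.linearCombination S id).restrictScalars R) ?_
  ext m
  exact congrArg (fun f => f m) hs

open MulOpposite in
theorem aux_bwd {A B : Type*} [Ring A] [Ring B]
    {G : Type*} [Group G] [Fintype G] [MulSemiringAction G A]
    (hcard : IsUnit ((Fintype.card G : A)))
    (φ : A →+* B) (u : G → Bˣ)
    (hu : ∀ g g' : G, (u g : B) * (u g' : B) = (u (g * g') : B))
    (hcomm : ∀ (g : G) (a : A), (u g : B) * φ a = φ (g • a) * (u g : B))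
    (hbasis : ∀ b : B, ∃! c : G → A, b = ∑ g : G, φ (c g) * (u g : B))
    {M : Type*} [AddCommGroup M] [Module Bᵐᵒᵖ M] [Module Aᵐᵒᵖ M]
    [Module Aᵐᵒᵖ Bᵐᵒᵖ] [IsScalarTower Aᵐᵒᵖ Bᵐᵒᵖ M] [IsScalarTower Aᵐᵒᵖ Bᵐᵒᵖ Bᵐᵒᵖ]
    (hs : ∀ (a : Aᵐᵒᵖ) (b : Bᵐᵒᵖ), a • b = RingHom.op φ a * b)
    [Module.Projective Aᵐᵒᵖ M] : Module.Projective Bᵐᵒᵖ M := by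
  have u1 : (u 1 : B) = 1 := by
    have h := hu 1 1
    rw [mul_one] at h
    exact (u 1).isUnit.mul_left_cancel (h.trans (mul_one _).symm)
  obtain ⟨s, hsec⟩ := Module.projective_lifting_property (R := Aᵐᵒᵖ)
    ((Finsupp.linearCombination Bᵐᵒᵖ (id : M → M)).restrictScalars Aᵐᵒᵖ) LinearMap.id
    (fun x => ⟨Finsupp.single x 1, by simp⟩)
  have hsec' : ∀ m, Finsupp.linearCombination Bᵐᵒᵖ (id : M → M) (s m) = m :=
    fun m => congrArg (fun f => f m) hsec
  have smM : ∀ (a : A) (m : M), op (φ a) • m = op a • m := by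
    intro a m
    rw [← one_smul Bᵐᵒᵖ m, ← smul_assoc (op a), hs, mul_one, one_smul]
    rfl
  have smP : ∀ (a : A) (m : M →₀ Bᵐᵒᵖ), op (φ a) • m = op a • m := by
    intro a m
    ext x
    rw [Finsupp.smul_apply, Finsupp.smul_apply, hs]
    rfl
  have sφ : ∀ (a : A) (m : M), s (op (φ a) • m) = op (φ a) • s m := by
    intro a m
    rw [smM, smP, map_smul]
  let T : M →+ (M →₀ Bᵐᵒᵖ) :=
    ∑ g : G, (DistribSMul.toAddMonoidHom (M →₀ Bᵐᵒᵖ) (op (u g : B))).comp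
      (s.toAddMonoidHom.comp (DistribSMul.toAddMonoidHom M (op (u g⁻¹ : B))))
  have hT : ∀ m, T m = ∑ g : G, op (u g : B) • s (op (u g⁻¹ : B) • m) := by
    intro m
    simp [T, AddMonoidHom.finsetSum_apply]
  have Tφ : ∀ (a : A) (m : M), T (op (φ a) • m) = op (φ a) • T m := by
    intro a m
    rw [hT, hT, Finset.smul_sum]
    refine Finset.sum_congr rfl fun g _ => ?_
    have h1 : op (u g⁻¹ : B) * op (φ a) = op (φ (g • a)) * op (u g⁻¹ : B) := by
      rw [← op_mul, ← op_mul, hcomm, inv_smul_smul]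
    have h2 : op (u g : B) * op (φ (g • a)) = op (φ a) * op (u g : B) := by
      rw [← op_mul, ← op_mul, hcomm]
    rw [smul_smul, h1, ← smul_smul, sφ, smul_smul, h2, smul_smul]
  have Tu : ∀ (h : G) (m : M), T (op (u h : B) • m) = op (u h : B) • T m := by
    intro h m
    rw [hT, hT, Finset.smul_sum]
    refine Fintype.sum_equiv (Equiv.mulRight h⁻¹) _ _ fun g => ?_
    rw [smul_smul, smul_smul, ← op_mul, ← op_mul, hu, hu]
    simp
  have TB : ∀ (b : Bᵐᵒᵖ) (m : M), T (b • m) = b • T m := by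
    intro b m
    obtain ⟨c, hc, -⟩ := hbasis (unop b)
    have hb : b = ∑ g, op (u g : B) * op (φ (c g)) := by
      rw [← op_unop b, hc, Finset.op_sum]
      rfl
    rw [hb, Finset.sum_smul, Finset.sum_smul, map_sum]
    refine Finset.sum_congr rfl fun g _ => ?_
    rw [← smul_smul, Tu, Tφ, smul_smul]
  let T' : M →ₗ[Bᵐᵒᵖ] (M →₀ Bᵐᵒᵖ) := { T with map_smul' := TB }
  have hTs : ∀ m, Finsupp.linearCombination Bᵐᵒᵖ (id : M → M) (T' m)
      = (Fintype.card G : Bᵐᵒᵖ) • m := by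
    intro m
    change Finsupp.linearCombination Bᵐᵒᵖ (id : M → M) (T m) = _
    rw [hT, map_sum]
    have : ∀ g : G, Finsupp.linearCombination Bᵐᵒᵖ (id : M → M)
        (op (u g : B) • s (op (u g⁻¹ : B) • m)) = m := by
      intro g
      rw [map_smul, hsec', smul_smul, ← op_mul, hu, inv_mul_cancel, u1, op_one, one_smul]
    simp only [this, Finset.sum_const, Finset.card_univ]
    rw [Nat.cast_smul_eq_nsmul]
  have hc : IsUnit (Fintype.card G : Bᵐᵒᵖ) := by
    have := (hcard.map φ).op
    simpa using this
  obtain ⟨v, hv⟩ := hc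
  have hcomm' : ∀ b : Bᵐᵒᵖ, Commute b (↑v⁻¹ : Bᵐᵒᵖ) := by
    intro b
    apply Commute.units_inv_right
    rw [hv]
    exact Nat.commute_cast b _
  let E : M →ₗ[Bᵐᵒᵖ] M :=
    { DistribSMul.toAddMonoidHom M (↑v⁻¹ : Bᵐᵒᵖ) with
      map_smul' := fun b m => by
        change (↑v⁻¹ : Bᵐᵒᵖ) • b • m = b • (↑v⁻¹ : Bᵐᵒᵖ) • m
        rw [smul_smul, smul_smul, (hcomm' b).eq] }
  refine Module.projective_def'.2 ⟨T' ∘ₗ E, ?_⟩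
  ext m
  change Finsupp.linearCombination Bᵐᵒᵖ (id : M → M) (T' ((↑v⁻¹ : Bᵐᵒᵖ) • m)) = m
  rw [hTs, ← hv, smul_smul, Units.mul_inv, one_smul]

/-- Let `G` be a finite group acting on a ring `A` by ring automorphisms, with `|G|`
invertible in `A`, and let `B = A∗G` be the skew group ring: `B` contains `A` via the ring
homomorphism `φ`, contains units `u g` for `g ∈ G` with `u g * u g' = u (g * g')` and
`u g * φ a = φ (g • a) * u g`, and is free as a left `A`-module with basis `{u g}`, i.e.
every element of `B` is uniquely of the form `∑ g, φ (c g) * u g`.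

Then a right `B`-module `M` (i.e. a left `Bᵐᵒᵖ`-module) is projective over `B` iff it is
projective over `A` under restriction of scalars along `φ : A → B`. -/
theorem stmt17 (A B : Type*) [Ring A] [Ring B]
    (G : Type*) [Group G] [Fintype G] [MulSemiringAction G A]
    (hcard : IsUnit ((Fintype.card G : A)))
    (φ : A →+* B) (u : G → Bˣ)
    (hu : ∀ g g' : G, (u g : B) * (u g' : B) = (u (g * g') : B))
    (hcomm : ∀ (g : G) (a : A), (u g : B) * φ a = φ (g • a) * (u g : B))
    (hbasis : ∀ b : B, ∃! c : G → A, b = ∑ g : G, φ (c g) * (u g : B))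
    (M : Type*) [AddCommGroup M] [Module Bᵐᵒᵖ M] :
    letI : Module Aᵐᵒᵖ M := Module.compHom M (RingHom.op φ)
    (Module.Projective Bᵐᵒᵖ M ↔ Module.Projective Aᵐᵒᵖ M) := by
  letI : Module Aᵐᵒᵖ M := Module.compHom M (RingHom.op φ)
  letI : Module Aᵐᵒᵖ Bᵐᵒᵖ := Module.compHom Bᵐᵒᵖ (RingHom.op φ)
  have hs : ∀ (a : Aᵐᵒᵖ) (b : Bᵐᵒᵖ), a • b = RingHom.op φ a * b := fun _ _ => rfl
  haveI : IsScalarTower Aᵐᵒᵖ Bᵐᵒᵖ M := ⟨fun a b m => by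
    rw [hs, mul_smul]
    rfl⟩
  haveI : IsScalarTower Aᵐᵒᵖ Bᵐᵒᵖ Bᵐᵒᵖ := ⟨fun a b m => by
    rw [hs, hs, smul_eq_mul, smul_eq_mul, mul_assoc]⟩
  haveI := aux_free φ u hcomm hbasis hs
  constructor
  · intro h
    exact aux_fwd (S := Bᵐᵒᵖ)
  · intro h
    exact aux_bwd hcard φ u hu hcomm hbasis hs
end
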